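/- arXiv:2410.02839 — 4 statements merged into one kernel-verified Lean document; each statement's English description precedes it below -/
import Mathlib

section
/- Let f be a smooth frame on ℝ⁴ whose first dual coframe leg f* 0 is closed as a 1-form (i.e. for every x the bilinear map (u,v) ↦ (fderiv ℝ (f* 0) x u) ⬝ v is symmetric), and suppose f is anholonomic at some point x₀, i.e. there exist indices j, k with [f j, f k](x₀) ≠ 0. For λ > 0 define the frame ê λ by ê λ 0 = f 0 and ê λ i = λ^{-1/2} • f i for i = 1, 2, 3. Then: (i) Σ_{i} (ê λ)* i converges pointwise to f* 0 and √λ • Σ_i ê λ i converges pointwise to Σ_{i=1}^{3} f i as λ → 0⁺; (ii) for every λ > 0 the connecting field of ê λ equals the connecting field C_f of f, so in particular the connecting fields converge pointwise to C_f as λ → 0⁺; and (iii) the torsion T_f of C_f is nonzero at x₀ (T_f x₀ a b c ≠ 0 for some a, b, c). -/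
noncomputable section

open Filter Topology

/-- ℝ⁴, modelled as `Fin 4 → ℝ`. -/
abbrev E4 : Type := Fin 4 → ℝ

/-- Coordinate partial derivative `∂_b g (x)`. -/
def pd (g : E4 → E4) (b : Fin 4) (x : E4) : E4 :=
  fderiv ℝ g x (Pi.single b 1)

/-- `fs` is the dual coframe of the frame `f`. -/
def IsDualCoframe (f fs : Fin 4 → (E4 → E4)) : Prop :=
  ∀ (x : E4) (i j : Fin 4), (∑ a, fs i x a * f j x a) = if i = j then 1 else 0

/-- A smooth frame on ℝ⁴: four smooth vector fields forming a basis at every point. -/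
def IsSmoothFrame (f : Fin 4 → (E4 → E4)) : Prop :=
  (∀ i, ContDiff ℝ (⊤ : ℕ∞) (f i)) ∧ ∀ x : E4, LinearIndependent ℝ (fun i => f i x)

/-- Connecting field `C_f x a b c = Σ_i (f* i x) c * ∂_b (f i)^a (x)` of the frame `f`
with dual coframe `fs`. -/
def conn (f fs : Fin 4 → (E4 → E4)) (x : E4) (a b c : Fin 4) : ℝ :=
  ∑ i, fs i x c * pd (f i) b x a

/-- Torsion of the connecting field of the frame `f` with dual coframe `fs`. -/
def torsion (f fs : Fin 4 → (E4 → E4)) (x : E4) (a b c : Fin 4) : ℝ :=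
  conn f fs x a b c - conn f fs x a c b

/-- Lie bracket of vector fields on ℝ⁴. -/
def lie (X Y : E4 → E4) (x : E4) : E4 :=
  fderiv ℝ Y x (X x) - fderiv ℝ X x (Y x)

/-!
The connecting field is characterised by `∂_b f_k^a = C^a_{bc} f_k^c`: it makes every leg of the
frame parallel. Rescaling a leg by a nonzero constant divides the dual leg by the same constant,
and the two factors cancel in `C`, so all the frames `ê λ` share one connecting field; only their
legs change in the limit. As the legs are parallel, the torsion of `C` evaluated on two of them is
their Lie bracket, so it cannot vanish where the frame is anholonomic.
-/

section DualFamily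

open scoped Matrix

variable {ι R : Type*} [Fintype ι] [DecidableEq ι]

/-- The covectors `w i` form the dual family of the vectors `v j`: this is duality of a coframe
with a frame at a single point, with covectors and vectors both given by their components. -/
def IsDualFamily [Semiring R] (v w : ι → ι → R) : Prop :=
  ∀ i j, w i ⬝ᵥ v j = if i = j then 1 else 0

namespace IsDualFamily

theorem mul_transpose_eq_one [Semiring R] {v w : ι → ι → R} (h : IsDualFamily v w) :
    Matrix.of w * (Matrix.of v)ᵀ = 1 := by
  ext i j
  exact (h i j).trans Matrix.one_apply.symm

theorem unique [CommSemiring R] {v w w' : ι → ι → R} (h : IsDualFamily v w)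
    (h' : IsDualFamily v w') : w' = w :=
  Matrix.of.injective <|
    left_inv_eq_right_inv h'.mul_transpose_eq_one (mul_eq_one_comm.mp h.mul_transpose_eq_one)

theorem inv_smul [Semifield R] {v w : ι → ι → R} (h : IsDualFamily v w) {s : ι → R}
    (hs : ∀ i, s i ≠ 0) : IsDualFamily (fun i => s i • v i) (fun i => (s i)⁻¹ • w i) := by
  intro i j
  rw [smul_dotProduct, dotProduct_smul, h i j]
  split_ifs with hij
  · simp [hij, hs j]
  · simp

end IsDualFamily

end DualFamily

section ConnectingField

open scoped Matrix

variable {ι 𝕜 : Type*} [Fintype ι] [DecidableEq ι] [NontriviallyNormedField 𝕜]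

/-- The connecting field `C_f` of a frame `f` with coframe `fs` in any dimension. For each point
`x` and upper index `a` it is a matrix whose row index is the direction of differentiation. -/
def connectingField (f fs : ι → (ι → 𝕜) → (ι → 𝕜)) (x : ι → 𝕜) (a : ι) : Matrix ι ι 𝕜 :=
  .of fun b c => ∑ i, fs i x c * fderiv 𝕜 (f i) x (Pi.single b 1) a

/-- The torsion of the connecting field: its antisymmetrisation, without a factor `1 / 2`, in the
two lower indices. -/
def connectingTorsion (f fs : ι → (ι → 𝕜) → (ι → 𝕜)) (x : ι → 𝕜) (a : ι) : Matrix ι ι 𝕜 :=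
  connectingField f fs x a - (connectingField f fs x a)ᵀ

variable {f fs : ι → (ι → 𝕜) → (ι → 𝕜)} {x : ι → 𝕜}

theorem connectingField_smul {s : ι → 𝕜} (hs : ∀ i, s i ≠ 0)
    (hf : ∀ i, DifferentiableAt 𝕜 (f i) x) {g gs : ι → (ι → 𝕜) → (ι → 𝕜)}
    (hg : ∀ i, g i = s i • f i) (hgs : ∀ i, gs i x = (s i)⁻¹ • fs i x) :
    connectingField g gs x = connectingField f fs x := by
  ext a b c
  refine Finset.sum_congr rfl fun i _ => ?_
  rw [hg, hgs, fderiv_const_smul (hf i)]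
  simp only [Pi.smul_apply, smul_apply, smul_eq_mul]
  field_simp [hs i]

theorem connectingField_mulVec (h : IsDualFamily (f · x) (fs · x)) (a k : ι) :
    connectingField f fs x a *ᵥ f k x = fun b => fderiv 𝕜 (f k) x (Pi.single b 1) a := by
  ext b
  calc ∑ c, (∑ i, fs i x c * fderiv 𝕜 (f i) x (Pi.single b 1) a) * f k x c
      = ∑ i, (fs i x ⬝ᵥ f k x) * fderiv 𝕜 (f i) x (Pi.single b 1) a := by
        simp only [dotProduct, Finset.sum_mul, mul_right_comm]
        exact Finset.sum_comm
    _ = fderiv 𝕜 (f k) x (Pi.single b 1) a := by simp [h _ k]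

theorem dotProduct_connectingField_mulVec (h : IsDualFamily (f · x) (fs · x)) (v : ι → 𝕜)
    (a k : ι) : v ⬝ᵥ connectingField f fs x a *ᵥ f k x = fderiv 𝕜 (f k) x v a := by
  rw [connectingField_mulVec h]
  conv_rhs => rw [pi_eq_sum_univ' v, map_sum]
  simp [dotProduct]

theorem dotProduct_connectingTorsion_mulVec (h : IsDualFamily (f · x) (fs · x)) (a j k : ι) :
    f j x ⬝ᵥ connectingTorsion f fs x a *ᵥ f k x = VectorField.lieBracket 𝕜 (f j) (f k) x a := by
  rw [connectingTorsion, Matrix.sub_mulVec, dotProduct_sub, Matrix.dotProduct_transpose_mulVec,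
    dotProduct_connectingField_mulVec h, dotProduct_connectingField_mulVec h]
  rfl

theorem exists_connectingTorsion_ne_zero (h : IsDualFamily (f · x) (fs · x)) {j k : ι}
    (hjk : VectorField.lieBracket 𝕜 (f j) (f k) x ≠ 0) :
    ∃ a b c, connectingTorsion f fs x a b c ≠ 0 := by
  obtain ⟨a, ha⟩ := Function.ne_iff.mp hjk
  refine ⟨a, ?_⟩
  by_contra! hzero
  have hT : connectingTorsion f fs x a = 0 := Matrix.ext hzero
  exact ha (by simp [← dotProduct_connectingTorsion_mulVec h, hT])

end ConnectingField

section NewtonianLimit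

variable {ι : Type*} [DecidableEq ι]

/-- The factors by which the legs of the frame with parameter `l` rescale those of the original
frame: `1` for the timelike leg `o` and `l ^ (-1 / 2)` for the spacelike ones. -/
def newtonianScale (o : ι) (l : ℝ) : ι → ℝ :=
  Function.update (fun _ => (√l)⁻¹) o 1

theorem newtonianScale_ne_zero (o : ι) {l : ℝ} (hl : 0 < l) (i : ι) :
    newtonianScale o l i ≠ 0 := by
  have := (Real.sqrt_pos.mpr hl).ne'
  by_cases hi : i = o <;> simp [newtonianScale, hi, this]

theorem tendsto_sqrt_nhdsGT_zero : Tendsto Real.sqrt (𝓝[>] 0) (𝓝 0) :=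
  (Real.continuous_sqrt.tendsto' 0 0 Real.sqrt_zero).mono_left nhdsWithin_le_nhds

theorem tendsto_inv_newtonianScale (o i : ι) :
    Tendsto (fun l => (newtonianScale o l i)⁻¹) (𝓝[>] 0) (𝓝 (if i = o then 1 else 0)) := by
  by_cases hi : i = o
  · simp [newtonianScale, hi]
  · simpa [newtonianScale, hi] using tendsto_sqrt_nhdsGT_zero

theorem tendsto_sqrt_mul_newtonianScale (o i : ι) :
    Tendsto (fun l => √l * newtonianScale o l i) (𝓝[>] 0) (𝓝 (if i = o then 0 else 1)) := by
  by_cases hi : i = o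
  · simpa [newtonianScale, hi] using tendsto_sqrt_nhdsGT_zero
  · rw [if_neg hi]
    refine tendsto_const_nhds.congr' ?_
    filter_upwards [self_mem_nhdsWithin] with l hl
    simp [newtonianScale, hi, (Real.sqrt_pos.mpr hl).ne']

variable [Fintype ι] {E : Type*} [AddCommGroup E] [Module ℝ E] [TopologicalSpace E]
  [ContinuousAdd E] [ContinuousSMul ℝ E]

theorem tendsto_sum_inv_newtonianScale_smul (o : ι) (w : ι → E) :
    Tendsto (fun l => ∑ i, (newtonianScale o l i)⁻¹ • w i) (𝓝[>] 0) (𝓝 (w o)) := by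
  simpa using tendsto_finsetSum Finset.univ fun i _ =>
    (tendsto_inv_newtonianScale o i).smul_const (w i)

theorem tendsto_sqrt_smul_sum_newtonianScale_smul (o : ι) (v : ι → E) :
    Tendsto (fun l => √l • ∑ i, newtonianScale o l i • v i) (𝓝[>] 0)
      (𝓝 (∑ i ∈ Finset.univ.erase o, v i)) := by
  simpa [Finset.smul_sum, smul_smul, ite_smul, Finset.sum_ite, Finset.filter_ne'] using
    tendsto_finsetSum Finset.univ fun i _ =>
      (tendsto_sqrt_mul_newtonianScale o i).smul_const (v i)

end NewtonianLimit

theorem stmt0_general {ι : Type*} [Fintype ι] [DecidableEq ι] (o : ι)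
    (f fs : ι → (ι → ℝ) → (ι → ℝ))
    (hf : ∀ i, Differentiable ℝ (f i))
    (hdual : ∀ x, IsDualFamily (f · x) (fs · x))
    (x₀ : ι → ℝ)
    (hanhol : ∃ j k, VectorField.lieBracket ℝ (f j) (f k) x₀ ≠ 0)
    (eh : ℝ → ι → (ι → ℝ) → (ι → ℝ))
    (heh0 : ∀ l, eh l o = f o)
    (hehi : ∀ l, ∀ i, i ≠ o → eh l i = (√l)⁻¹ • f i)
    (ehs : ℝ → ι → (ι → ℝ) → (ι → ℝ))
    (hehs : ∀ l, 0 < l → ∀ x, IsDualFamily (eh l · x) (ehs l · x)) :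
    (∀ x, Tendsto (fun l => ∑ i, ehs l i x) (𝓝[>] 0) (𝓝 (fs o x))) ∧
    (∀ x, Tendsto (fun l => √l • ∑ i, eh l i x) (𝓝[>] 0)
      (𝓝 (∑ i ∈ Finset.univ.erase o, f i x))) ∧
    (∀ l, 0 < l → ∀ x a b c,
      connectingField (eh l) (ehs l) x a b c = connectingField f fs x a b c) ∧
    (∀ x a b c, Tendsto (fun l => connectingField (eh l) (ehs l) x a b c) (𝓝[>] 0)
      (𝓝 (connectingField f fs x a b c))) ∧
    (∃ a b c, connectingTorsion f fs x₀ a b c ≠ 0) := by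
  have heh (l : ℝ) (i : ι) : eh l i = newtonianScale o l i • f i := by
    by_cases hi : i = o
    · simp [newtonianScale, hi, heh0]
    · simp [newtonianScale, hi, hehi]
  have hcoframe {l : ℝ} (hl : 0 < l) (x : ι → ℝ) (i : ι) :
      ehs l i x = (newtonianScale o l i)⁻¹ • fs i x := by
    have hscaled := (hdual x).inv_smul (newtonianScale_ne_zero o hl)
    have hl_dual := hehs l hl x
    simp only [heh] at hl_dual
    exact congrFun (hscaled.unique hl_dual) i
  have hconn {l : ℝ} (hl : 0 < l) (x : ι → ℝ) :
      connectingField (eh l) (ehs l) x = connectingField f fs x :=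
    connectingField_smul (newtonianScale_ne_zero o hl) (fun i => hf i x) (heh l) (hcoframe hl x)
  refine ⟨fun x => ?_, fun x => ?_, fun l hl x a b c => by rw [hconn hl], fun x a b c => ?_, ?_⟩
  · refine (tendsto_sum_inv_newtonianScale_smul o (fs · x)).congr' ?_
    filter_upwards [self_mem_nhdsWithin] with l hl
    simp only [hcoframe hl]
  · simpa only [heh, Pi.smul_apply] using tendsto_sqrt_smul_sum_newtonianScale_smul o (f · x)
  · refine tendsto_const_nhds.congr' ?_
    filter_upwards [self_mem_nhdsWithin] with l hl
    rw [hconn hl]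
  · obtain ⟨j, k, hjk⟩ := hanhol
    exact exists_connectingTorsion_ne_zero (hdual x₀) hjk

/-- for a smooth frame `f` with closed first coframe leg which is anholonomic
at some point `x₀`, the rescaled frames `ê λ` (with `ê λ 0 = f 0`, `ê λ i = λ^{-1/2} • f i`)
satisfy the convergence conditions C1*, C2*, their connecting fields are constant in `λ`
(hence converge to the connecting field of `f`), and the limiting torsion is nonzero
at `x₀`. -/
theorem stmt0
    (f fs : Fin 4 → (E4 → E4))
    (hframe : IsSmoothFrame f)
    (hdual : IsDualCoframe f fs)
    (hclosed : ∀ (x u v : E4),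
      (∑ a, fderiv ℝ (fs 0) x u a * v a) = ∑ a, fderiv ℝ (fs 0) x v a * u a)
    (x₀ : E4)
    (hanhol : ∃ j k, lie (f j) (f k) x₀ ≠ 0)
    (eh : ℝ → Fin 4 → (E4 → E4))
    (heh0 : ∀ l : ℝ, eh l 0 = f 0)
    (hehi : ∀ l : ℝ, ∀ i : Fin 4, i ≠ 0 → eh l i = (Real.sqrt l)⁻¹ • f i)
    (ehs : ℝ → Fin 4 → (E4 → E4))
    (hehs : ∀ l : ℝ, 0 < l → IsDualCoframe (eh l) (ehs l)) :
    -- (i) condition C1*: Σ_i (ê λ)* i → f* 0 pointwise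
    (∀ x : E4, Tendsto (fun l : ℝ => ∑ i, ehs l i x) (nhdsWithin 0 (Set.Ioi 0))
      (nhds (fs 0 x))) ∧
    -- (i) condition C2*: √λ • Σ_i ê λ i → Σ_{i=1}^{3} f i pointwise
    (∀ x : E4, Tendsto (fun l : ℝ => Real.sqrt l • ∑ i, eh l i x)
      (nhdsWithin 0 (Set.Ioi 0)) (nhds (∑ i ∈ ({1, 2, 3} : Finset (Fin 4)), f i x))) ∧
    -- (ii) the connecting field of ê λ equals that of f, for every λ > 0 ...
    (∀ l : ℝ, 0 < l → ∀ (x : E4) (a b c : Fin 4),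
      conn (eh l) (ehs l) x a b c = conn f fs x a b c) ∧
    (∀ (x : E4) (a b c : Fin 4),
      Tendsto (fun l : ℝ => conn (eh l) (ehs l) x a b c) (nhdsWithin 0 (Set.Ioi 0))
        (nhds (conn f fs x a b c))) ∧
    -- (iii) the torsion of C_f is nonzero at x₀
    (∃ a b c, torsion f fs x₀ a b c ≠ 0) :=
  stmt0_general 0 f fs (fun i => (hframe.1 i).differentiable (by simp)) hdual x₀ hanhol
    eh heh0 hehi ehs hehs
end
end

section
/- Let f be a smooth frame on ℝ⁴ with connecting field C_f and torsion T_f x a b c = C_f x a b c − C_f x a c b. Then for all indices j, k, all points x, and all components a: Σ_{b} Σ_{c} T_f x a b c * (f j x) b * (f k x) c = ([f j, f k] x) a. In words: the torsion of the frame-parallelising derivative operator, contracted with two frame legs, equals the Lie bracket of those legs. -/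
noncomputable section

open Filter Topology

/-!
With `Γ(v, w) = Σ_i θ^i(w) D f_i(v)`, the derivative operator `∇_v w = D w(v) - Γ(v, w)` makes the
frame parallel. On a leg of the frame, duality collapses the sum to `Γ(v, f_k) = D f_k(v)`, so
antisymmetrising `Γ` on two legs gives `D f_k(f_j) - D f_j(f_k)`, which is the coordinate formula
for `[f_j, f_k]`.
-/

theorem bilinear_apply_eq_sum_single {R m n N : Type*} [CommSemiring R] [AddCommMonoid N]
    [Module R N] [Fintype m] [Fintype n] [DecidableEq m] [DecidableEq n]
    (B : (m → R) →ₗ[R] (n → R) →ₗ[R] N) (v : m → R) (w : n → R) :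
    B v w = ∑ i, ∑ j, v i • w j • B (Pi.single i 1) (Pi.single j 1) := by
  simpa using Matrix.toLinearMap₂'_apply (R := R) (LinearMap.toMatrix₂' R B) v w

section LinearAlgebra

variable {R M ι : Type*} [CommRing R] [AddCommGroup M] [Module R M] [Fintype ι]

/-- The connecting field at a point, as a bilinear map: `v, w ↦ Σ_i θ^i(w) D_i(v)`. Here `θ` is the
coframe and `D i` the derivative of the `i`-th leg of the frame, both at that point; the direction
of differentiation is the first argument. -/
def frameConnection (θ : ι → Module.Dual R M) (D : ι → M →ₗ[R] M) : M →ₗ[R] M →ₗ[R] M :=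
  (∑ i, (θ i).smulRight (D i)).flip

/-- The torsion at a point of the derivative operator that parallelises a frame with coframe `θ`
and derivatives `D`, as the antisymmetrisation (without factor `1 / 2`) of its connecting field. -/
def frameTorsion (θ : ι → Module.Dual R M) (D : ι → M →ₗ[R] M) : M →ₗ[R] M →ₗ[R] M :=
  frameConnection θ D - (frameConnection θ D).flip

theorem frameConnection_apply (θ : ι → Module.Dual R M) (D : ι → M →ₗ[R] M) (v w : M) :
    frameConnection θ D v w = ∑ i, θ i w • D i v := by
  simp [frameConnection]

theorem frameTorsion_apply (θ : ι → Module.Dual R M) (D : ι → M →ₗ[R] M) (v w : M) :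
    frameTorsion θ D v w = frameConnection θ D v w - frameConnection θ D w v :=
  rfl

variable [DecidableEq ι] {θ : ι → Module.Dual R M} {e : ι → M}

theorem frameConnection_apply_frame (hθ : ∀ i j, θ i (e j) = if i = j then 1 else 0)
    (D : ι → M →ₗ[R] M) (v : M) (k : ι) : frameConnection θ D v (e k) = D k v := by
  simp [frameConnection_apply, hθ]

theorem frameTorsion_apply_frame (hθ : ∀ i j, θ i (e j) = if i = j then 1 else 0)
    (D : ι → M →ₗ[R] M) (j k : ι) :
    frameTorsion θ D (e j) (e k) = D k (e j) - D j (e k) := by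
  rw [frameTorsion_apply, frameConnection_apply_frame hθ, frameConnection_apply_frame hθ]

end LinearAlgebra

theorem stmt2_general {𝕜 E ι : Type*} [NontriviallyNormedField 𝕜] [NormedAddCommGroup E]
    [NormedSpace 𝕜 E] [Fintype ι] [DecidableEq ι] {f : ι → E → E} {f' : ι → E →L[𝕜] E}
    {θ : ι → Module.Dual 𝕜 E} {x : E} (hf : ∀ i, HasFDerivAt (f i) (f' i) x)
    (hθ : ∀ i j, θ i (f j x) = if i = j then 1 else 0) (j k : ι) :
    frameTorsion θ (fun i => (f' i : E →ₗ[𝕜] E)) (f j x) (f k x) =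
      VectorField.lieBracket 𝕜 (f j) (f k) x := by
  rw [frameTorsion_apply_frame (e := fun i => f i x) hθ, VectorField.lieBracket,
    (hf j).fderiv, (hf k).fderiv, ContinuousLinearMap.coe_coe, ContinuousLinearMap.coe_coe]

section Coordinates

theorem lie_eq_lieBracket (X Y : E4 → E4) : lie X Y = VectorField.lieBracket ℝ X Y :=
  rfl

theorem IsSmoothFrame.hasFDerivAt {f : Fin 4 → E4 → E4} (hf : IsSmoothFrame f) (x : E4)
    (i : Fin 4) : HasFDerivAt (f i) (fderiv ℝ (f i) x) x :=
  ((hf.1 i).differentiable (by simp) x).hasFDerivAt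

variable (f fs : Fin 4 → E4 → E4) (x : E4)

theorem frameConnection_single (a b c : Fin 4) :
    frameConnection (fun i => dotProductBilin ℝ ℝ (fs i x))
      (fun i => (fderiv ℝ (f i) x : E4 →ₗ[ℝ] E4)) (Pi.single b 1) (Pi.single c 1) a =
    conn f fs x a b c := by
  simp [frameConnection_apply, conn, pd]

theorem frameTorsion_single (a b c : Fin 4) :
    frameTorsion (fun i => dotProductBilin ℝ ℝ (fs i x))
      (fun i => (fderiv ℝ (f i) x : E4 →ₗ[ℝ] E4)) (Pi.single b 1) (Pi.single c 1) a =
    torsion f fs x a b c := by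
  rw [frameTorsion_apply, Pi.sub_apply, frameConnection_single, frameConnection_single, torsion]

theorem sum_torsion_mul_mul (v w : E4) (a : Fin 4) :
    ∑ b, ∑ c, torsion f fs x a b c * v b * w c =
      frameTorsion (fun i => dotProductBilin ℝ ℝ (fs i x))
        (fun i => (fderiv ℝ (f i) x : E4 →ₗ[ℝ] E4)) v w a := by
  rw [bilinear_apply_eq_sum_single]
  simp only [Finset.sum_apply, Pi.smul_apply, smul_eq_mul, frameTorsion_single]
  exact Finset.sum_congr rfl fun b _ => Finset.sum_congr rfl fun c _ => by ring

end Coordinates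

/-- the torsion of the frame-parallelising derivative operator,
contracted with two frame legs, equals the Lie bracket of those legs:
`Σ_b Σ_c T_f x a b c * (f j x) b * (f k x) c = ([f j, f k] x) a`. -/
theorem stmt2
    (f fs : Fin 4 → (E4 → E4))
    (hframe : IsSmoothFrame f)
    (hdual : IsDualCoframe f fs) :
    ∀ (j k : Fin 4) (x : E4) (a : Fin 4),
      (∑ b, ∑ c, torsion f fs x a b c * f j x b * f k x c) = lie (f j) (f k) x a := by
  intro j k x a
  rw [sum_torsion_mul_mul, stmt2_general (hframe.hasFDerivAt x) (hdual x),
    lie_eq_lieBracket]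
end
end

section
/- Let f : Fin 4 → ℝ⁴ be a basis of ℝ⁴ with dual basis f*. For λ > 0 define ê λ 0 = f 0, ê λ 1 = λ^{-1/2} • f 1, ê λ 2 = λ^{-1/2} • ((λ^{-1} + 1) • f 2), ê λ 3 = λ^{-1/2} • (−λ^{-1} • f 2 + f 3). Then: (i) ê λ is a basis of ℝ⁴ for every λ > 0, with dual basis (ê λ)* 0 = f* 0, (ê λ)* 1 = √λ • f* 1, (ê λ)* 2 = √λ • ((λ/(λ+1)) • f* 2 + (1/(λ+1)) • f* 3), (ê λ)* 3 = √λ • f* 3; (ii) Σ_i (ê λ)* i → f* 0 as λ → 0⁺ (condition C1*); (iii) √λ • Σ_i ê λ i → f 1 + f 2 + f 3 as λ → 0⁺ (condition C2*); (iv) the matrix g λ = Σ_i η i * ((ê λ)* i ⊗ (ê λ)* i) converges to f* 0 ⊗ f* 0 as λ → 0⁺, where η 0 = 1 and η 1 = η 2 = η 3 = −1 (metric condition C1); but (v) there is NO matrix h such that λ • Σ_i η i * (ê λ i ⊗ ê λ i) → h as λ → 0⁺, i.e. the rescaled inverse metric fails to converge (metric condition C2 fails). Hence conditions C1* and C2*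 are strictly weaker than the metric convergence conditions C1 and C2. -/
noncomputable section

open Filter Topology

/-- `bs` is the dual basis of the basis `b` of ℝ⁴. -/
def IsDualBasis (b bs : Fin 4 → E4) : Prop :=
  ∀ i j : Fin 4, (∑ a, bs i a * b j a) = if i = j then 1 else 0

/-- Outer product `(v ⊗ w) a b = v a * w b`. -/
def outer (v w : E4) : Matrix (Fin 4) (Fin 4) ℝ := fun a b => v a * w b

/-- Minkowski signs: `η 0 = 1`, `η 1 = η 2 = η 3 = −1`. -/
def eta : Fin 4 → ℝ := fun i => if i = 0 then 1 else -1

/-!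
Up to rescaling its vectors, `ê λ` is obtained from `f` by the single shear `f 3 ↦ f 3 - λ⁻¹ • f 2`,
so the dual basis undergoes `f* 2 ↦ f* 2 + λ⁻¹ • f* 3` and the inverse rescaling. As `λ → 0⁺`,
the dual basis tends to `(f* 0, 0, 0, 0)`, and the metric is a continuous function of it. The
divergent multiples of `f 2` in `ê λ 2` and `ê λ 3` cancel in the sum `Σ ê λ i`, but not in the
inverse metric, where they enter quadratically and with the same sign: its `(f* 2, f* 2)` component,
multiplied by `λ`, is `-((λ⁻¹ + 1)² + λ⁻²)`.
-/

namespace IsDualBasis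

variable {b bs : Fin 4 → E4}

theorem dotProduct_eq (h : IsDualBasis b bs) (i j : Fin 4) :
    bs i ⬝ᵥ b j = if i = j then 1 else 0 :=
  h i j

theorem smul (h : IsDualBasis b bs) {c : Fin 4 → ℝ} (hc : ∀ i, c i ≠ 0) :
    IsDualBasis (fun i => c i • b i) (fun i => (c i)⁻¹ • bs i) := by
  intro i j
  change ((c i)⁻¹ • bs i) ⬝ᵥ (c j • b j) = _
  rw [smul_dotProduct, dotProduct_smul, h.dotProduct_eq]
  rcases eq_or_ne i j with rfl | hij
  · simp [hc i]
  · simp [hij]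

theorem shear (h : IsDualBasis b bs) {i j : Fin 4} (hij : i ≠ j) (t : ℝ) :
    IsDualBasis (Function.update b j (b j + t • b i))
      (Function.update bs i (bs i - t • bs j)) := by
  intro k m
  change Function.update bs i _ k ⬝ᵥ Function.update b j _ m = _
  rcases eq_or_ne k i with rfl | hk <;> rcases eq_or_ne m j with rfl | hm
  · simp [h.dotProduct_eq, hij, hij.symm]
  · simp [h.dotProduct_eq, hm, hm.symm]
  · simp [h.dotProduct_eq, hk]
  · simp [h.dotProduct_eq, hk, hm]

end IsDualBasis

section ShearedFrame

variable {V : Type*} [AddCommGroup V] [Module ℝ V]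

/-- The frame `ê l` built from the frame `f`. -/
def shearedFrame (f : Fin 4 → V) (l : ℝ) : Fin 4 → V :=
  ![f 0, (√l)⁻¹ • f 1, (√l)⁻¹ • ((l⁻¹ + 1) • f 2), (√l)⁻¹ • ((-l⁻¹) • f 2 + f 3)]

/-- The coframe `(ê l)*` dual to `shearedFrame f l`, built from the coframe `fs` dual to `f`. -/
def shearedCoframe (fs : Fin 4 → V) (l : ℝ) : Fin 4 → V :=
  ![fs 0, √l • fs 1, √l • ((l / (l + 1)) • fs 2 + (1 / (l + 1)) • fs 3), √l • fs 3]

/-- The factors by which the vectors of the frame are rescaled after the shear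
`f 3 ↦ f 3 - l⁻¹ • f 2` to give `shearedFrame f l`. -/
def shearedScale (l : ℝ) : Fin 4 → ℝ :=
  ![1, (√l)⁻¹, (√l)⁻¹ * (l⁻¹ + 1), (√l)⁻¹]

theorem shearedScale_ne_zero {l : ℝ} (hl : 0 < l) (i : Fin 4) : shearedScale l i ≠ 0 := by
  have hs : √l ≠ 0 := Real.sqrt_ne_zero'.2 hl
  have ha : l⁻¹ + 1 ≠ 0 := by positivity
  fin_cases i <;> simp [shearedScale, hs, ha]

theorem shearedFrame_eq_smul_update (f : Fin 4 → V) (l : ℝ) :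
    shearedFrame f l =
      fun i => shearedScale l i • Function.update f 3 (f 3 + (-l⁻¹) • f 2) i := by
  funext i
  fin_cases i <;> simp [shearedFrame, shearedScale, mul_smul, add_comm]

theorem shearedCoframe_eq_smul_update (fs : Fin 4 → V) {l : ℝ} (hl : 0 < l) :
    shearedCoframe fs l =
      fun i => (shearedScale l i)⁻¹ • Function.update fs 2 (fs 2 - (-l⁻¹) • fs 3) i := by
  have h₂ : (l⁻¹ + 1)⁻¹ = l / (l + 1) := by field_simp; ring
  have h₃ : l / (l + 1) * l⁻¹ = (l + 1)⁻¹ := by field_simp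
  funext i
  fin_cases i <;>
    simp [shearedCoframe, shearedScale, -mul_inv_rev, mul_inv, smul_smul, mul_assoc, h₂, h₃]

theorem IsDualBasis.shearedFrame {f fs : Fin 4 → E4} (h : IsDualBasis f fs) {l : ℝ} (hl : 0 < l) :
    IsDualBasis (shearedFrame f l) (shearedCoframe fs l) := by
  rw [shearedFrame_eq_smul_update, shearedCoframe_eq_smul_update fs hl]
  exact (h.shear (by decide) _).smul (shearedScale_ne_zero hl)

theorem sqrt_smul_sum_shearedFrame (f : Fin 4 → V) {l : ℝ} (hl : 0 < l) :
    √l • ∑ i, shearedFrame f l i = √l • f 0 + (f 1 + f 2 + f 3) := by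
  have hs : √l ≠ 0 := Real.sqrt_ne_zero'.2 hl
  simp only [shearedFrame, Fin.sum_univ_four, Matrix.cons_val, smul_add, smul_inv_smul₀ hs]
  module

variable [TopologicalSpace V] [ContinuousSMul ℝ V]

theorem tendsto_sqrt_smul_nhdsGT_zero {u : ℝ → V} {v : V} (hu : Tendsto u (𝓝[>] 0) (𝓝 v)) :
    Tendsto (fun l => √l • u l) (𝓝[>] 0) (𝓝 0) := by
  have hs : Tendsto Real.sqrt (𝓝[>] 0) (𝓝 0) :=
    (Real.continuous_sqrt.tendsto' 0 0 Real.sqrt_zero).mono_left nhdsWithin_le_nhds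
  simpa only [zero_smul] using hs.smul hu

variable [ContinuousAdd V]

theorem tendsto_sqrt_smul_sum_shearedFrame (f : Fin 4 → V) :
    Tendsto (fun l => √l • ∑ i, shearedFrame f l i) (𝓝[>] 0) (𝓝 (f 1 + f 2 + f 3)) := by
  have h : Tendsto (fun l => √l • f 0 + (f 1 + f 2 + f 3)) (𝓝[>] 0) (𝓝 (f 1 + f 2 + f 3)) := by
    simpa only [zero_add] using
      (tendsto_sqrt_smul_nhdsGT_zero (tendsto_const_nhds (x := f 0))).add_const (f 1 + f 2 + f 3)
  refine h.congr' ?_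
  filter_upwards [self_mem_nhdsWithin] with l hl
  exact (sqrt_smul_sum_shearedFrame f hl).symm

theorem tendsto_shearedCoframe (fs : Fin 4 → V) :
    Tendsto (shearedCoframe fs) (𝓝[>] 0) (𝓝 (Pi.single 0 (fs 0))) := by
  have hcoeff : ContinuousAt
      (fun l : ℝ => (l / (l + 1)) • fs 2 + (1 / (l + 1)) • fs 3) 0 := by
    fun_prop (disch := norm_num)
  refine tendsto_pi_nhds.2 fun i => ?_
  fin_cases i
  · exact tendsto_const_nhds
  · exact tendsto_sqrt_smul_nhdsGT_zero tendsto_const_nhds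
  · exact tendsto_sqrt_smul_nhdsGT_zero (hcoeff.tendsto.mono_left nhdsWithin_le_nhds)
  · exact tendsto_sqrt_smul_nhdsGT_zero tendsto_const_nhds

end ShearedFrame

section TetradMetric

open scoped Matrix

theorem outer_eq_vecMulVec (v w : E4) : outer v w = Matrix.vecMulVec v w :=
  rfl

/-- The symmetric tensor for which the tetrad `e` is orthonormal: the metric if `e` is a coframe,
the inverse metric if `e` is a frame. -/
def tetradMetric (e : Fin 4 → E4) : Matrix (Fin 4) (Fin 4) ℝ :=
  ∑ i, eta i • outer (e i) (e i)

theorem continuous_tetradMetric : Continuous tetradMetric := by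
  unfold tetradMetric
  simp only [outer_eq_vecMulVec]
  fun_prop

theorem tetradMetric_single (i : Fin 4) (v : E4) :
    tetradMetric (Pi.single i v) = eta i • outer v v := by
  rw [tetradMetric, Fintype.sum_eq_single i fun j hj => by simp [hj, outer_eq_vecMulVec],
    Pi.single_eq_same]

theorem dotProduct_outer_mulVec (v w x y : E4) : x ⬝ᵥ outer v w *ᵥ y = (x ⬝ᵥ v) * (w ⬝ᵥ y) := by
  simp [outer_eq_vecMulVec, Matrix.vecMulVec_mulVec, mul_comm]

theorem dotProduct_tetradMetric_mulVec (e : Fin 4 → E4) (x : E4) :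
    x ⬝ᵥ tetradMetric e *ᵥ x = ∑ i, eta i * (x ⬝ᵥ e i) ^ 2 := by
  simp only [tetradMetric, Matrix.sum_mulVec, dotProduct_sum, Matrix.smul_mulVec, dotProduct_smul,
    dotProduct_outer_mulVec, dotProduct_comm (e _) x, smul_eq_mul, sq]

variable {f fs : Fin 4 → E4}

theorem dotProduct_smul_tetradMetric_shearedFrame_mulVec (h : IsDualBasis f fs) {l : ℝ}
    (hl : 0 < l) :
    fs 2 ⬝ᵥ (l • tetradMetric (shearedFrame f l)) *ᵥ fs 2 = -((l⁻¹ + 1) ^ 2 + l⁻¹ ^ 2) := by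
  have hs : l * (√l)⁻¹ ^ 2 = 1 := by rw [inv_pow, Real.sq_sqrt hl.le, mul_inv_cancel₀ hl.ne']
  calc fs 2 ⬝ᵥ (l • tetradMetric (shearedFrame f l)) *ᵥ fs 2
      = l * ∑ i, eta i * (fs 2 ⬝ᵥ shearedFrame f l i) ^ 2 := by
        rw [Matrix.smul_mulVec, dotProduct_smul, dotProduct_tetradMetric_mulVec, smul_eq_mul]
    _ = l * (-((√l)⁻¹ * (l⁻¹ + 1)) ^ 2 - ((√l)⁻¹ * l⁻¹) ^ 2) := by
        simp [Fin.sum_univ_four, shearedFrame, h.dotProduct_eq, eta, sub_eq_add_neg]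
    _ = -((l⁻¹ + 1) ^ 2 + l⁻¹ ^ 2) := by
        linear_combination -((l⁻¹ + 1) ^ 2 + l⁻¹ ^ 2) * hs

theorem tendsto_dotProduct_smul_tetradMetric_shearedFrame_mulVec (h : IsDualBasis f fs) :
    Tendsto (fun l => fs 2 ⬝ᵥ (l • tetradMetric (shearedFrame f l)) *ᵥ fs 2) (𝓝[>] 0) atBot := by
  have hinv : Tendsto (fun l : ℝ => l⁻¹) (𝓝[>] 0) atTop := tendsto_inv_nhdsGT_zero
  have hsq : Tendsto (fun l : ℝ => (l⁻¹ + 1) ^ 2 + l⁻¹ ^ 2) (𝓝[>] 0) atTop :=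
    ((tendsto_pow_atTop two_ne_zero).comp (tendsto_atTop_add_const_right _ 1 hinv)).atTop_add_atTop
      ((tendsto_pow_atTop two_ne_zero).comp hinv)
  refine (tendsto_neg_atTop_atBot.comp hsq).congr' ?_
  filter_upwards [self_mem_nhdsWithin] with l hl
  exact (dotProduct_smul_tetradMetric_shearedFrame_mulVec h hl).symm

theorem not_tendsto_smul_tetradMetric_shearedFrame (h : IsDualBasis f fs)
    (M : Matrix (Fin 4) (Fin 4) ℝ) :
    ¬ Tendsto (fun l => l • tetradMetric (shearedFrame f l)) (𝓝[>] 0) (𝓝 M) := by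
  intro hM
  have hcont : Continuous fun M : Matrix (Fin 4) (Fin 4) ℝ => fs 2 ⬝ᵥ M *ᵥ fs 2 := by fun_prop
  exact not_tendsto_nhds_of_tendsto_atBot
    (tendsto_dotProduct_smul_tetradMetric_shearedFrame_mulVec h) _ ((hcont.tendsto M).comp hM)

end TetradMetric

/-- the explicit family `ê λ 0 = f 0`, `ê λ 1 = λ^{-1/2} • f 1`,
`ê λ 2 = λ^{-1/2} • ((λ⁻¹ + 1) • f 2)`, `ê λ 3 = λ^{-1/2} • (−λ⁻¹ • f 2 + f 3)`
is a basis with the stated dual basis, satisfies the tetrad conditions C1* and C2* and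
the metric condition C1, but its rescaled inverse metric fails to converge (C2 fails):
C1* and C2* are strictly weaker than C1 and C2. -/
theorem stmt7
    (f fs : Fin 4 → E4)
    (hdualf : IsDualBasis f fs)
    (eh ehs : ℝ → Fin 4 → E4)
    (heh0 : ∀ l : ℝ, eh l 0 = f 0)
    (heh1 : ∀ l : ℝ, eh l 1 = (Real.sqrt l)⁻¹ • f 1)
    (heh2 : ∀ l : ℝ, eh l 2 = (Real.sqrt l)⁻¹ • ((l⁻¹ + 1) • f 2))
    (heh3 : ∀ l : ℝ, eh l 3 = (Real.sqrt l)⁻¹ • ((-l⁻¹) • f 2 + f 3))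
    (hehs0 : ∀ l : ℝ, ehs l 0 = fs 0)
    (hehs1 : ∀ l : ℝ, ehs l 1 = Real.sqrt l • fs 1)
    (hehs2 : ∀ l : ℝ, ehs l 2 =
      Real.sqrt l • ((l / (l + 1)) • fs 2 + (1 / (l + 1)) • fs 3))
    (hehs3 : ∀ l : ℝ, ehs l 3 = Real.sqrt l • fs 3) :
    -- (i) ê λ is a basis with dual basis (ê λ)*
    (∀ l : ℝ, 0 < l → IsDualBasis (eh l) (ehs l)) ∧
    -- (ii) condition C1*
    (Tendsto (fun l : ℝ => ∑ i, ehs l i) (nhdsWithin 0 (Set.Ioi 0)) (nhds (fs 0))) ∧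
    -- (iii) condition C2*
    (Tendsto (fun l : ℝ => Real.sqrt l • ∑ i, eh l i) (nhdsWithin 0 (Set.Ioi 0))
      (nhds (f 1 + f 2 + f 3))) ∧
    -- (iv) metric condition C1
    (Tendsto (fun l : ℝ => ∑ i, eta i • outer (ehs l i) (ehs l i))
      (nhdsWithin 0 (Set.Ioi 0)) (nhds (outer (fs 0) (fs 0)))) ∧
    -- (v) metric condition C2 fails: the rescaled inverse metric does not converge
    (¬ ∃ h : Matrix (Fin 4) (Fin 4) ℝ,
      Tendsto (fun l : ℝ => l • ∑ i, eta i • outer (eh l i) (eh l i))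
        (nhdsWithin 0 (Set.Ioi 0)) (nhds h)) := by
  obtain rfl : eh = shearedFrame f := by
    funext l i
    fin_cases i <;> simp [shearedFrame, heh0, heh1, heh2, heh3]
  obtain rfl : ehs = shearedCoframe fs := by
    funext l i
    fin_cases i <;> simp [shearedCoframe, hehs0, hehs1, hehs2, hehs3]
  have hlim : Tendsto (shearedCoframe fs) (𝓝[>] 0) (𝓝 (Pi.single 0 (fs 0))) :=
    tendsto_shearedCoframe fs
  refine ⟨fun l hl => hdualf.shearedFrame hl, ?_, tendsto_sqrt_smul_sum_shearedFrame f, ?_, ?_⟩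
  · simpa using tendsto_finsetSum Finset.univ fun i _ => tendsto_pi_nhds.1 hlim i
  · have houter : tetradMetric (Pi.single 0 (fs 0)) = outer (fs 0) (fs 0) := by
      simp [tetradMetric_single, eta]
    exact houter ▸ (continuous_tetradMetric.tendsto _).comp hlim
  · rintro ⟨M, hM⟩
    exact not_tendsto_smul_tetradMetric_shearedFrame hdualf M hM
end
end

section
/- Let f be a smooth frame on ℝ⁴ and for λ > 0 define ê λ 0 = f 0 and ê λ i = λ^{-1/2} • f i for i = 1, 2, 3. Then, pointwise in x as λ → 0⁺: (i) (ê λ)* 0 x → f* 0 x, λ^{-1/2} • (ê λ)* i x → f* i x, ê λ 0 x → f 0 x, and √λ • ê λ i x → f i x for i = 1, 2, 3 (in fact all four families are constant in λ); (ii) the metric g λ x = Σ_i η i * ((ê λ)* i x ⊗ (ê λ)* i x) converges to f* 0 x ⊗ f* 0 x; and (iii) the rescaled inverse metric λ • Σ_i η i * (ê λ i x ⊗ ê λ i x) converges to −Σ_{i=1}^{3} f i x ⊗ f i x, where η 0 = 1, η 1 = η 2 = η 3 = −1. Hence the counterexample family satisfies both the frame convergence conditions and Malament's metric convergence conditions C1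 and C2. -/
noncomputable section

open Filter Topology

/-!
Rescaling the spatial legs of a frame by `s` rescales the spatial legs of its dual coframe by
`s⁻¹`, so for `s = λ^{-1/2}` the rescalings in (i) cancel exactly, the metric is
`f* 0 ⊗ f* 0 - λ • Σ_{i ≠ 0} f* i ⊗ f* i`, and `λ` times the inverse metric is
`λ • f 0 ⊗ f 0 - Σ_{i ≠ 0} f i ⊗ f i`.
-/

section DualFrame

open scoped Matrix

variable {ι κ R : Type*} [DecidableEq ι] [Fintype κ]

/-- `fs` is a dual family, in coordinates, of the family of vectors `f`. This is the condition that
`IsDualCoframe` imposes at each point of `E4`, over any commutative ring and in any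
dimension. -/
def IsDualFrame [CommRing R] (f fs : ι → κ → R) : Prop :=
  ∀ i j, fs i ⬝ᵥ f j = if i = j then 1 else 0

/-- The family obtained from `v` by multiplying every member except the one at the distinguished
(time) index `o` by `s`. -/
def rescaleSpace {M : Type*} [SMul R M] (o : ι) (s : R) (v : ι → M) : ι → M :=
  fun i => if i = o then v i else s • v i

lemma rescaleSpace_self {M : Type*} [SMul R M] (o : ι) (s : R) (v : ι → M) :
    rescaleSpace o s v o = v o :=
  if_pos rfl

lemma rescaleSpace_of_ne {M : Type*} [SMul R M] {o i : ι} (hi : i ≠ o) (s : R) (v : ι → M) :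
    rescaleSpace o s v i = s • v i :=
  if_neg hi

namespace IsDualFrame

variable [CommRing R]

lemma mul_transpose_eq_one {f fs : ι → κ → R} (h : IsDualFrame f fs) :
    Matrix.of fs * (Matrix.of f)ᵀ = 1 := by
  ext i j
  rw [Matrix.one_apply]
  exact h i j

lemma unique [Fintype ι] {f fs gs : ι → ι → R} (hfs : IsDualFrame f fs) (hgs : IsDualFrame f gs) :
    fs = gs :=
  Matrix.of.injective <| left_inv_eq_right_inv hfs.mul_transpose_eq_one
    (mul_eq_one_comm.mp hgs.mul_transpose_eq_one)

protected lemma rescaleSpace {f fs : ι → κ → R} (h : IsDualFrame f fs) (o : ι) {s t : R}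
    (hst : s * t = 1) : IsDualFrame (rescaleSpace o s f) (rescaleSpace o t fs) := by
  intro i j
  by_cases hi : i = o <;> by_cases hj : j = o
  · rw [hi, hj, rescaleSpace_self, rescaleSpace_self, h]
  · subst hi
    rw [rescaleSpace_self, rescaleSpace_of_ne hj, dotProduct_smul, h, if_neg (Ne.symm hj),
      smul_zero]
  · subst hj
    rw [rescaleSpace_self, rescaleSpace_of_ne hi, smul_dotProduct, h, if_neg hi, smul_zero]
  · rw [rescaleSpace_of_ne hi, rescaleSpace_of_ne hj, smul_dotProduct, dotProduct_smul, smul_smul,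
      mul_comm t s, hst, one_smul, h]

lemma eq_rescaleSpace [Fintype ι] {f fs gs : ι → ι → R} (h : IsDualFrame f fs) {o : ι} {s t : R}
    (hst : s * t = 1) (hgs : IsDualFrame (rescaleSpace o s f) gs) : gs = rescaleSpace o t fs :=
  hgs.unique (h.rescaleSpace o hst)

end IsDualFrame

end DualFrame

section LorentzForm

variable {ι κ R : Type*} [DecidableEq ι] [Fintype ι] [CommRing R]

/-- The tensor `Σ_i η i • v i ⊗ v i`, where `η` is `1` at the time index `o` and `-1` elsewhere: the
metric when `v` is a coframe, the inverse metric when `v` is a frame. -/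
def lorentzForm (o : ι) (v : ι → κ → R) : Matrix κ κ R :=
  ∑ i, (if i = o then (1 : R) else -1) • Matrix.vecMulVec (v i) (v i)

/-- The spatial tensor `Σ_{i ≠ o} v i ⊗ v i`. -/
def spatialForm (o : ι) (v : ι → κ → R) : Matrix κ κ R :=
  ∑ i ∈ {o}ᶜ, Matrix.vecMulVec (v i) (v i)

lemma lorentzForm_eq_sub_spatialForm (o : ι) (v : ι → κ → R) :
    lorentzForm o v = Matrix.vecMulVec (v o) (v o) - spatialForm o v := by
  rw [lorentzForm, Fintype.sum_eq_add_sum_compl o, if_pos rfl, one_smul, sub_eq_add_neg,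
    spatialForm, ← Finset.sum_neg_distrib]
  congr 1
  refine Finset.sum_congr rfl fun i hi => ?_
  rw [if_neg (by simpa using hi), neg_one_smul]

lemma spatialForm_rescaleSpace (o : ι) (s : R) (v : ι → κ → R) :
    spatialForm o (rescaleSpace o s v) = s ^ 2 • spatialForm o v := by
  rw [spatialForm, spatialForm, Finset.smul_sum]
  refine Finset.sum_congr rfl fun i hi => ?_
  rw [rescaleSpace_of_ne (by simpa using hi), Matrix.smul_vecMulVec, Matrix.vecMulVec_smul,
    smul_smul, sq]

lemma lorentzForm_rescaleSpace (o : ι) (s : R) (v : ι → κ → R) :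
    lorentzForm o (rescaleSpace o s v) =
      Matrix.vecMulVec (v o) (v o) - s ^ 2 • spatialForm o v := by
  rw [lorentzForm_eq_sub_spatialForm, rescaleSpace_self, spatialForm_rescaleSpace]

end LorentzForm

section Limits

variable {ι κ : Type*} [DecidableEq ι] [Fintype ι]

lemma tendsto_lorentzForm_rescaleSpace_sqrt (o : ι) (v : ι → κ → ℝ) :
    Tendsto (fun l : ℝ => lorentzForm o (rescaleSpace o (Real.sqrt l) v)) (𝓝[>] 0)
      (𝓝 (Matrix.vecMulVec (v o) (v o))) := by
  have hcont : Continuous fun l : ℝ => Matrix.vecMulVec (v o) (v o) - l • spatialForm o v := by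
    fun_prop
  have hlim := (hcont.tendsto 0).mono_left (nhdsWithin_le_nhds (s := Set.Ioi 0))
  rw [zero_smul, sub_zero] at hlim
  refine tendsto_nhdsWithin_congr (fun l (hl : 0 < l) => ?_) hlim
  rw [lorentzForm_rescaleSpace, Real.sq_sqrt hl.le]

lemma tendsto_smul_lorentzForm_rescaleSpace_inv_sqrt (o : ι) (v : ι → κ → ℝ) :
    Tendsto (fun l : ℝ => l • lorentzForm o (rescaleSpace o (Real.sqrt l)⁻¹ v)) (𝓝[>] 0)
      (𝓝 (-spatialForm o v)) := by
  have hcont : Continuous fun l : ℝ => l • Matrix.vecMulVec (v o) (v o) - spatialForm o v := by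
    fun_prop
  have hlim := (hcont.tendsto 0).mono_left (nhdsWithin_le_nhds (s := Set.Ioi 0))
  rw [zero_smul, zero_sub] at hlim
  refine tendsto_nhdsWithin_congr (fun l (hl : 0 < l) => ?_) hlim
  rw [lorentzForm_rescaleSpace, inv_pow, Real.sq_sqrt hl.le, smul_sub, smul_inv_smul₀ hl.ne']

end Limits

theorem stmt9_general {ι X : Type*} [DecidableEq ι] [Fintype ι] (o : ι)
    (f fs : ι → X → ι → ℝ)
    (hdual : ∀ x, IsDualFrame (f · x) (fs · x))
    (eh : ℝ → ι → X → ι → ℝ)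
    (heh0 : ∀ l : ℝ, 0 < l → eh l o = f o)
    (hehi : ∀ l : ℝ, 0 < l → ∀ i, i ≠ o → eh l i = (Real.sqrt l)⁻¹ • f i)
    (ehs : ℝ → ι → X → ι → ℝ)
    (hehs : ∀ l : ℝ, 0 < l → ∀ x, IsDualFrame (eh l · x) (ehs l · x)) :
    (∀ l : ℝ, 0 < l → ∀ x,
      ehs l o x = fs o x ∧
      (∀ i, i ≠ o → (Real.sqrt l)⁻¹ • ehs l i x = fs i x) ∧
      eh l o x = f o x ∧
      (∀ i, i ≠ o → Real.sqrt l • eh l i x = f i x)) ∧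
    (∀ x,
      Tendsto (fun l : ℝ => ehs l o x) (𝓝[>] 0) (𝓝 (fs o x)) ∧
      (∀ i, i ≠ o →
        Tendsto (fun l : ℝ => (Real.sqrt l)⁻¹ • ehs l i x) (𝓝[>] 0) (𝓝 (fs i x))) ∧
      Tendsto (fun l : ℝ => eh l o x) (𝓝[>] 0) (𝓝 (f o x)) ∧
      (∀ i, i ≠ o →
        Tendsto (fun l : ℝ => Real.sqrt l • eh l i x) (𝓝[>] 0) (𝓝 (f i x)))) ∧
    (∀ x, Tendsto (fun l : ℝ => lorentzForm o (ehs l · x)) (𝓝[>] 0)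
      (𝓝 (Matrix.vecMulVec (fs o x) (fs o x)))) ∧
    (∀ x, Tendsto (fun l : ℝ => l • lorentzForm o (eh l · x)) (𝓝[>] 0)
      (𝓝 (-spatialForm o (f · x)))) := by
  have hframe : ∀ l > 0, ∀ x, rescaleSpace o (Real.sqrt l)⁻¹ (f · x) = (eh l · x) := by
    intro l hl x
    ext1 i
    obtain rfl | hi := eq_or_ne i o
    · rw [rescaleSpace_self, heh0 l hl]
    · rw [rescaleSpace_of_ne hi, hehi l hl i hi, Pi.smul_apply]
  have hcoframe : ∀ l > 0, ∀ x, rescaleSpace o (Real.sqrt l) (fs · x) = (ehs l · x) := by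
    intro l hl x
    refine ((hdual x).eq_rescaleSpace (inv_mul_cancel₀ (Real.sqrt_pos.mpr hl).ne') ?_).symm
    rw [hframe l hl x]
    exact hehs l hl x
  have hconst : ∀ l > 0, ∀ x,
      ehs l o x = fs o x ∧ (∀ i, i ≠ o → (Real.sqrt l)⁻¹ • ehs l i x = fs i x) ∧
      eh l o x = f o x ∧ (∀ i, i ≠ o → Real.sqrt l • eh l i x = f i x) := by
    intro l hl x
    have hs : Real.sqrt l ≠ 0 := (Real.sqrt_pos.mpr hl).ne'
    refine ⟨?_, fun i hi => ?_, congrFun (heh0 l hl) x, fun i hi => ?_⟩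
    · rw [← congrFun (hcoframe l hl x) o, rescaleSpace_self]
    · rw [← congrFun (hcoframe l hl x) i, rescaleSpace_of_ne hi, inv_smul_smul₀ hs]
    · rw [hehi l hl i hi, Pi.smul_apply, smul_inv_smul₀ hs]
  have hlim {u : ℝ → ι → ℝ} {c : ι → ℝ} (hu : ∀ l > 0, u l = c) : Tendsto u (𝓝[>] 0) (𝓝 c) :=
    tendsto_nhdsWithin_congr (fun l hl => (hu l hl).symm) tendsto_const_nhds
  refine ⟨hconst, fun x => ⟨?_, fun i hi => ?_, ?_, fun i hi => ?_⟩, fun x => ?_, fun x => ?_⟩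
  · exact hlim fun l hl => (hconst l hl x).1
  · exact hlim fun l hl => (hconst l hl x).2.1 i hi
  · exact hlim fun l hl => (hconst l hl x).2.2.1
  · exact hlim fun l hl => (hconst l hl x).2.2.2 i hi
  · exact tendsto_nhdsWithin_congr (fun l hl => congrArg _ (hcoframe l hl x))
      (tendsto_lorentzForm_rescaleSpace_sqrt o (fs · x))
  · exact tendsto_nhdsWithin_congr (fun l hl => congrArg (l • lorentzForm o ·) (hframe l hl x))
      (tendsto_smul_lorentzForm_rescaleSpace_inv_sqrt o (f · x))

/-- the counterexample family `ê λ 0 = f 0`, `ê λ i = λ^{-1/2} • f i`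
(i = 1,2,3) satisfies the frame convergence conditions (all relevant rescaled families
being constant in λ) as well as Malament's metric convergence conditions C1 and C2. -/
theorem stmt9
    (f fs : Fin 4 → (E4 → E4))
    (hframe : IsSmoothFrame f)
    (hdual : IsDualCoframe f fs)
    (eh : ℝ → Fin 4 → (E4 → E4))
    (heh0 : ∀ l : ℝ, eh l 0 = f 0)
    (hehi : ∀ l : ℝ, ∀ i : Fin 4, i ≠ 0 → eh l i = (Real.sqrt l)⁻¹ • f i)
    (ehs : ℝ → Fin 4 → (E4 → E4))
    (hehs : ∀ l : ℝ, 0 < l → IsDualCoframe (eh l) (ehs l)) :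
    -- (i) the four rescaled families are constant in λ ...
    (∀ l : ℝ, 0 < l → ∀ x : E4,
      ehs l 0 x = fs 0 x ∧
      (∀ i : Fin 4, i ≠ 0 → (Real.sqrt l)⁻¹ • ehs l i x = fs i x) ∧
      eh l 0 x = f 0 x ∧
      (∀ i : Fin 4, i ≠ 0 → Real.sqrt l • eh l i x = f i x)) ∧
    -- ... and in particular converge pointwise as λ → 0⁺
    (∀ x : E4,
      Tendsto (fun l : ℝ => ehs l 0 x) (nhdsWithin 0 (Set.Ioi 0)) (nhds (fs 0 x)) ∧
      (∀ i : Fin 4, i ≠ 0 →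
        Tendsto (fun l : ℝ => (Real.sqrt l)⁻¹ • ehs l i x) (nhdsWithin 0 (Set.Ioi 0))
          (nhds (fs i x))) ∧
      Tendsto (fun l : ℝ => eh l 0 x) (nhdsWithin 0 (Set.Ioi 0)) (nhds (f 0 x)) ∧
      (∀ i : Fin 4, i ≠ 0 →
        Tendsto (fun l : ℝ => Real.sqrt l • eh l i x) (nhdsWithin 0 (Set.Ioi 0))
          (nhds (f i x)))) ∧
    -- (ii) metric condition C1: g λ x → (f* 0 x) ⊗ (f* 0 x)
    (∀ x : E4,
      Tendsto (fun l : ℝ => ∑ i, eta i • outer (ehs l i x) (ehs l i x))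
        (nhdsWithin 0 (Set.Ioi 0)) (nhds (outer (fs 0 x) (fs 0 x)))) ∧
    -- (iii) metric condition C2: λ • (inverse metric) x → −Σ_{i=1}^{3} (f i x) ⊗ (f i x)
    (∀ x : E4,
      Tendsto (fun l : ℝ => l • ∑ i, eta i • outer (eh l i x) (eh l i x))
        (nhdsWithin 0 (Set.Ioi 0))
        (nhds (-∑ i ∈ ({1, 2, 3} : Finset (Fin 4)), outer (f i x) (f i x)))) :=
  -- Definitional unfolding does the translation; `{0}ᶜ` evaluates to `{1, 2, 3}`.
  stmt9_general 0 f fs hdual eh (fun l _ => heh0 l) (fun l _ => hehi l) ehs hehs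
end
end
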